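/- Let (A,φ) be a connection and Higgs field on ℝ³. Then (A,φ) solves the space-time monopole equation if and only if for every μ ∈ ℂ∖{0} the operators D₁(μ) and D₂(μ) commute, where D₁(μ)E = ½∂_tE + μ∂_zE − (½(A_t + iφ) + μA_z)E and D₂(μ)E = ½∂_tE + μ⁻¹∂_z̄E − (½(A_t − iφ) + μ⁻¹A_z̄)E, i.e. D₁(μ)(D₂(μ)E) = D₂(μ)(D₁(μ)E) for every smooth map E : ℝ³ → M_n(ℂ). -/

import Mathlib

open Matrix Complex
open scoped Matrix ComplexConjugate

attribute [local instance] Matrix.normedAddCommGroup Matrix.normedSpace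

noncomputable section

/-- `n × n` complex matrices. -/
abbrev Mat (n : ℕ) := Matrix (Fin n) (Fin n) ℂ

/-- Space-time `ℝ³` with coordinates `(x, y, t)`. -/
abbrev P3 : Type := ℝ × ℝ × ℝ

section PartialDerivatives

variable {W : Type*} [NormedAddCommGroup W] [NormedSpace ℝ W]

/-- Partial derivative in `x`. -/
def pdx (f : P3 → W) (p : P3) : W := deriv (fun s => f (s, p.2.1, p.2.2)) p.1

/-- Partial derivative in `y`. -/
def pdy (f : P3 → W) (p : P3) : W := deriv (fun s => f (p.1, s, p.2.2)) p.2.1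

/-- Partial derivative in `t`. -/
def pdt (f : P3 → W) (p : P3) : W := deriv (fun s => f (p.1, p.2.1, s)) p.2.2

/-- Light-cone derivative `∂_ξ = ∂_t + ∂_x`. -/
def pdxi (f : P3 → W) (p : P3) : W := pdt f p + pdx f p

/-- Light-cone derivative `∂_η = ∂_t − ∂_x`. -/
def pdeta (f : P3 → W) (p : P3) : W := pdt f p - pdx f p

end PartialDerivatives

/-- `∂_z = ½(∂_x − i ∂_y)`. -/
def pdz {n : ℕ} (f : P3 → Mat n) (p : P3) : Mat n :=
  (2⁻¹ : ℂ) • (pdx f p - Complex.I • pdy f p)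

/-- `∂_z̄ = ½(∂_x + i ∂_y)`. -/
def pdzbar {n : ℕ} (f : P3 → Mat n) (p : P3) : Mat n :=
  (2⁻¹ : ℂ) • (pdx f p + Complex.I • pdy f p)

/-- Commutator `[X, Y] = XY − YX`. -/
def brk {n : ℕ} (X Y : Mat n) : Mat n := X * Y - Y * X

/-- Anti-Hermitian-valued map. -/
def SkewHerm {n : ℕ} (f : P3 → Mat n) : Prop := ∀ p : P3, (f p)ᴴ = -(f p)

/-- The space-time monopole equation `F_{xy} = −∇_tφ`, `F_{xt} = −∇_yφ`, `F_{yt} = ∇_xφ`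
for the connection `(Ax, Ay, At)` and Higgs field `Ph`, at the point `p`. -/
def MonopoleEqAt {n : ℕ} (Ax Ay At Ph : P3 → Mat n) (p : P3) : Prop :=
  (-(pdx Ay p) + pdy Ax p + brk (Ax p) (Ay p) = -(pdt Ph p - brk (At p) (Ph p))) ∧
  (-(pdx At p) + pdt Ax p + brk (Ax p) (At p) = -(pdy Ph p - brk (Ay p) (Ph p))) ∧
  (-(pdy At p) + pdt Ay p + brk (Ay p) (At p) = pdx Ph p - brk (Ax p) (Ph p))

/-- The space-time monopole equation on all of `ℝ³`. -/
def MonopoleEq {n : ℕ} (Ax Ay At Ph : P3 → Mat n) : Prop :=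
  ∀ p : P3, MonopoleEqAt Ax Ay At Ph p

/-- `E` solves the `μ`-linear system for `(A, φ)`. -/
def SolvesMu {n : ℕ} (Ax Ay At Ph : P3 → Mat n) (μ : ℂ) (E : P3 → Mat n) : Prop :=
  ∀ p : P3,
    (2⁻¹ : ℂ) • pdt E p + μ • pdz E p =
      ((2⁻¹ : ℂ) • (At p + Complex.I • Ph p) +
        μ • ((2⁻¹ : ℂ) • (Ax p - Complex.I • Ay p))) * E p ∧
    (2⁻¹ : ℂ) • pdt E p + μ⁻¹ • pdzbar E p =
      ((2⁻¹ : ℂ) • (At p - Complex.I • Ph p) +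
        μ⁻¹ • ((2⁻¹ : ℂ) • (Ax p + Complex.I • Ay p))) * E p

/-- `F` solves the `λ`-linear system for `(A, φ)`. -/
def SolvesLam {n : ℕ} (Ax Ay At Ph : P3 → Mat n) (lm : ℂ) (F : P3 → Mat n) : Prop :=
  ∀ p : P3,
    lm • pdxi F p - pdy F p = (lm • (At p + Ax p) - (Ay p + Ph p)) * F p ∧
    lm⁻¹ • pdeta F p - pdy F p = (lm⁻¹ • (At p - Ax p) - (Ay p - Ph p)) * F p

/-- The operator `D₁(μ) = ½∂_t + μ∂_z − (½(A_t + iφ) + μA_z)`. -/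
def DOneOp {n : ℕ} (Ax Ay At Ph : P3 → Mat n) (μ : ℂ) (E : P3 → Mat n) : P3 → Mat n :=
  fun p =>
    (2⁻¹ : ℂ) • pdt E p + μ • pdz E p -
      ((2⁻¹ : ℂ) • (At p + Complex.I • Ph p) +
        μ • ((2⁻¹ : ℂ) • (Ax p - Complex.I • Ay p))) * E p

/-- The operator `D₂(μ) = ½∂_t + μ⁻¹∂_z̄ − (½(A_t − iφ) + μ⁻¹A_z̄)`. -/
def DTwoOp {n : ℕ} (Ax Ay At Ph : P3 → Mat n) (μ : ℂ) (E : P3 → Mat n) : P3 → Mat n :=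
  fun p =>
    (2⁻¹ : ℂ) • pdt E p + μ⁻¹ • pdzbar E p -
      ((2⁻¹ : ℂ) • (At p - Complex.I • Ph p) +
        μ⁻¹ • ((2⁻¹ : ℂ) • (Ax p + Complex.I • Ay p))) * E p

/-! Both Lax operators have the form `δ - P` with `δ` a constant-coefficient first-order operator
and `P` a matrix potential. Symmetry of second derivatives and the Leibniz rule cancel every
derivative of `E` in the commutator, which is therefore left multiplication by a matrix, the
curvature of the pair. That curvature is a Laurent polynomial in `μ`, namely
`(i/2) X + (μ/4) (Y - i Z) - (μ⁻¹/4) (Y + i Z)` with `X = F_xy + ∇_tφ`, `Y = F_xt + ∇_yφ` and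
`Z = F_yt - ∇_xφ`. It vanishes for all `μ ≠ 0` exactly when `X = Y = Z = 0`, and testing the
commutator on `E = 1` recovers it. -/

section LaurentCoefficients

variable {K M : Type*} [Field K] [CharZero K] [AddCommGroup M] [Module K M]

theorem forall_ne_zero_laurent_eq_zero_iff {X Y Z : M} :
    (∀ a : K, a ≠ 0 → X + a • Y + a⁻¹ • Z = 0) ↔ X = 0 ∧ Y = 0 ∧ Z = 0 := by
  refine ⟨fun h => ?_, by rintro ⟨rfl, rfl, rfl⟩; simp⟩
  have h₁ := h 1 one_ne_zero
  have h₂ := h (-1) (neg_ne_zero.2 one_ne_zero)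
  have h₃ := h 2 two_ne_zero
  have hX : X = 0 := by linear_combination (norm := module) (2⁻¹ : K) • h₁ + (2⁻¹ : K) • h₂
  have hY : Y = 0 := by
    linear_combination (norm := module) (2 / 3 : K) • h₃ - (3⁻¹ : K) • h₁ - (3⁻¹ : K) • hX
  have hZ : Z = 0 := by linear_combination (norm := module) h₁ - hX - hY
  exact ⟨hX, hY, hZ⟩

theorem sub_smul_eq_zero_and_add_smul_eq_zero_iff {a : K} (ha : a ≠ 0) {Y Z : M} :
    Y - a • Z = 0 ∧ Y + a • Z = 0 ↔ Y = 0 ∧ Z = 0 := by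
  refine ⟨fun ⟨hsub, hadd⟩ => ?_, by rintro ⟨rfl, rfl⟩; simp⟩
  have hY : Y = 0 := by linear_combination (norm := module) (2⁻¹ : K) • hsub + (2⁻¹ : K) • hadd
  exact ⟨hY, by simpa [hY, ha] using hadd⟩

end LaurentCoefficients

section ConstCoeffDeriv

variable {V F R ι κ : Type*} [NormedAddCommGroup V] [NormedSpace ℝ V]
  [NormedAddCommGroup F] [NormedSpace ℝ F] [Fintype ι] [Fintype κ]

/-- The first-order operator `∑ i, c i ∂_{v i}`. The coefficients may lie in a larger ring than `ℝ`,
so that operators such as `∂_z` on functions of real variables are included. -/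
def constCoeffDeriv [Semiring R] [Module R F] (c : ι → R) (v : ι → V) (f : V → F) (x : V) : F :=
  ∑ i, c i • fderiv ℝ f x (v i)

section Semiring

variable [Semiring R] [Module R F] (c : ι → R) (v : ι → V) {f g : V → F} {x : V}

theorem constCoeffDeriv_add (hf : DifferentiableAt ℝ f x) (hg : DifferentiableAt ℝ g x) :
    constCoeffDeriv c v (f + g) x = constCoeffDeriv c v f x + constCoeffDeriv c v g x := by
  simp [constCoeffDeriv, fderiv_add hf hg, Finset.sum_add_distrib]

theorem constCoeffDeriv_sub (hf : DifferentiableAt ℝ f x) (hg : DifferentiableAt ℝ g x) :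
    constCoeffDeriv c v (f - g) x = constCoeffDeriv c v f x - constCoeffDeriv c v g x := by
  simp [constCoeffDeriv, fderiv_sub hf hg, smul_sub, Finset.sum_sub_distrib]

theorem constCoeffDeriv_bilinear {G H : Type*} [NormedAddCommGroup G] [NormedSpace ℝ G]
    [Module R G] [NormedAddCommGroup H] [NormedSpace ℝ H] [Module R H] {b : F × G → H}
    (hb : IsBoundedBilinearMap ℝ b) (hb_left : ∀ (r : R) y z, b (r • y, z) = r • b (y, z))
    (hb_right : ∀ (r : R) y z, b (y, r • z) = r • b (y, z)) {g : V → G}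
    (hf : DifferentiableAt ℝ f x) (hg : DifferentiableAt ℝ g x) :
    constCoeffDeriv c v (fun y => b (f y, g y)) x =
      b (f x, constCoeffDeriv c v g x) + b (constCoeffDeriv c v f x, g x) := by
  have hleibniz (w : V) : fderiv ℝ (fun y => b (f y, g y)) x w =
      b (f x, fderiv ℝ g x w) + b (fderiv ℝ f x w, g x) :=
    congr($(((hb.hasFDerivAt (f x, g x)).comp x (hf.hasFDerivAt.prodMk hg.hasFDerivAt)).fderiv) w)
  have hsum_left (y : ι → F) (z : G) : b (∑ i, y i, z) = ∑ i, b (y i, z) :=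
    map_sum (hb.toContinuousLinearMap.flip z) y _
  have hsum_right (y : F) (z : ι → G) : b (y, ∑ i, z i) = ∑ i, b (y, z i) :=
    map_sum (hb.toContinuousLinearMap y) z _
  simp only [constCoeffDeriv, hleibniz, hsum_left, hsum_right, hb_left, hb_right, smul_add,
    Finset.sum_add_distrib]

variable [SMulCommClass ℝ R F] [ContinuousConstSMul R F]

theorem differentiableAt_constCoeffDeriv (hf : DifferentiableAt ℝ (fderiv ℝ f) x) :
    DifferentiableAt ℝ (constCoeffDeriv c v f) x :=
  DifferentiableAt.fun_sum fun i _ =>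
    (hf.clm_apply (differentiableAt_const (v i))).const_smul (c i)

theorem constCoeffDeriv_constCoeffDeriv (d : κ → R) (w : κ → V)
    (hf : DifferentiableAt ℝ (fderiv ℝ f) x) :
    constCoeffDeriv c v (constCoeffDeriv d w f) x =
      ∑ i, ∑ j, c i • d j • fderiv ℝ (fderiv ℝ f) x (v i) (w j) := by
  have hfw (j : κ) : DifferentiableAt ℝ (fun y => fderiv ℝ f y (w j)) x :=
    hf.clm_apply (differentiableAt_const (w j))
  have hfderiv : fderiv ℝ (constCoeffDeriv d w f) x =
      ∑ j, d j • fderiv ℝ (fun y => fderiv ℝ f y (w j)) x :=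
    (fderiv_fun_sum fun j _ => (hfw j).const_smul (d j)).trans
      (Finset.sum_congr rfl fun j _ => fderiv_fun_const_smul (hfw j) (d j))
  simp [constCoeffDeriv, hfderiv, Finset.smul_sum,
    fderiv_clm_apply hf (differentiableAt_const _)]

end Semiring

theorem differentiableAt_fderiv_of_contDiffAt_two {f : V → F} {x : V} (hf : ContDiffAt ℝ 2 f x) :
    DifferentiableAt ℝ (fderiv ℝ f) x :=
  (hf.fderiv_right (m := 1) (by norm_num)).differentiableAt one_ne_zero

variable [CommSemiring R] [Module R F] [SMulCommClass ℝ R F] [ContinuousConstSMul R F]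
  {f : V → F} {x : V}

theorem constCoeffDeriv_const_smul (c : ι → R) (v : ι → V) (r : R) (hf : DifferentiableAt ℝ f x) :
    constCoeffDeriv c v (r • f) x = r • constCoeffDeriv c v f x := by
  simp [constCoeffDeriv, fderiv_const_smul hf, Finset.smul_sum, smul_comm r]

theorem constCoeffDeriv_comm (c : ι → R) (v : ι → V) (d : κ → R) (w : κ → V)
    (hf : ContDiffAt ℝ 2 f x) :
    constCoeffDeriv c v (constCoeffDeriv d w f) x =
      constCoeffDeriv d w (constCoeffDeriv c v f) x := by
  have hf' := differentiableAt_fderiv_of_contDiffAt_two hf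
  have hsymm : IsSymmSndFDerivAt ℝ f x := hf.isSymmSndFDerivAt (by simp)
  rw [constCoeffDeriv_constCoeffDeriv _ _ _ _ hf', constCoeffDeriv_constCoeffDeriv _ _ _ _ hf',
    Finset.sum_comm]
  simp only [hsymm.eq, smul_comm (c _)]

end ConstCoeffDeriv

section MatrixMultiplication

variable {α l m n : Type*} [Fintype m]

theorem norm_matrix_mul_le [Fintype l] [Fintype n] [NonUnitalNormedRing α]
    (X : Matrix l m α) (Y : Matrix m n α) :
    ‖X * Y‖ ≤ Fintype.card m * ‖X‖ * ‖Y‖ := by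
  refine (Matrix.norm_le_iff (by positivity)).2 fun i j => ?_
  have hentry (k : m) : ‖X i k * Y k j‖ ≤ ‖X‖ * ‖Y‖ :=
    (norm_mul_le _ _).trans <| mul_le_mul X.norm_entry_le_entrywise_sup_norm
      Y.norm_entry_le_entrywise_sup_norm (norm_nonneg _) (norm_nonneg _)
  calc ‖∑ k, X i k * Y k j‖ ≤ ∑ _k : m, ‖X‖ * ‖Y‖ := norm_sum_le_of_le _ fun k _ => hentry k
    _ = Fintype.card m * ‖X‖ * ‖Y‖ := by simp [mul_assoc]

variable [NormedRing α] [NormedAlgebra ℝ α]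

theorem isBoundedBilinearMap_matrix_mul [Fintype l] [Fintype n] :
    IsBoundedBilinearMap ℝ fun q : Matrix l m α × Matrix m n α => q.1 * q.2 where
  add_left X X' Y := Matrix.add_mul X X' Y
  smul_left r X Y := Matrix.smul_mul r X Y
  add_right X Y Y' := Matrix.mul_add X Y Y'
  smul_right r X Y := Matrix.mul_smul X r Y
  bound := ⟨Fintype.card m + 1, by positivity, fun X Y =>
    (norm_matrix_mul_le X Y).trans (by gcongr; simp)⟩

theorem differentiableAt_matrix_mul [Finite l] [Finite n] {V : Type*} [NormedAddCommGroup V]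
    [NormedSpace ℝ V] {f : V → Matrix l m α} {g : V → Matrix m n α} {x : V}
    (hf : DifferentiableAt ℝ f x) (hg : DifferentiableAt ℝ g x) :
    DifferentiableAt ℝ (fun y => f y * g y) x := by
  have := Fintype.ofFinite l
  have := Fintype.ofFinite n
  exact DifferentiableAt.comp (g := fun q : Matrix l m α × Matrix m n α => q.1 * q.2) x
    (isBoundedBilinearMap_matrix_mul.differentiableAt (f x, g x)) (hf.prodMk hg)

end MatrixMultiplication

section CovariantDerivative

variable {V 𝕜 l m n ι κ : Type*} [NormedAddCommGroup V] [NormedSpace ℝ V] [RCLike 𝕜]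
  [Fintype l] [Fintype m] [Fintype n] [Fintype ι] [Fintype κ] {x : V}

theorem constCoeffDeriv_matrix_mul (c : ι → 𝕜) (v : ι → V) {f : V → Matrix l m 𝕜}
    {g : V → Matrix m n 𝕜} (hf : DifferentiableAt ℝ f x) (hg : DifferentiableAt ℝ g x) :
    constCoeffDeriv c v (fun y => f y * g y) x =
      f x * constCoeffDeriv c v g x + constCoeffDeriv c v f x * g x :=
  constCoeffDeriv_bilinear c v isBoundedBilinearMap_matrix_mul
    (fun r X Y => Matrix.smul_mul r X Y) (fun r X Y => Matrix.mul_smul X r Y) hf hg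

/-- The operator `δ - P`, where `δ = ∑ i, c i ∂_{v i}` and the potential `P` acts by left
multiplication. -/
def covDeriv (c : ι → 𝕜) (v : ι → V) (P : V → Matrix m m 𝕜) (E : V → Matrix m n 𝕜) (x : V) :
    Matrix m n 𝕜 :=
  constCoeffDeriv c v E x - P x * E x

theorem differentiableAt_covDeriv (c : ι → 𝕜) (v : ι → V) {P : V → Matrix m m 𝕜}
    {E : V → Matrix m n 𝕜} (hP : DifferentiableAt ℝ P x) (hE : ContDiffAt ℝ 2 E x) :
    DifferentiableAt ℝ (covDeriv c v P E) x :=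
  (differentiableAt_constCoeffDeriv c v (differentiableAt_fderiv_of_contDiffAt_two hE)).sub
    (differentiableAt_matrix_mul hP (hE.differentiableAt two_ne_zero))

/-- The curvature `ε P - δ Q + [P, Q]` of the operators `δ - P` and `ε - Q`, where
`δ = ∑ i, c i ∂_{v i}` and `ε = ∑ j, d j ∂_{w j}`. The signs are those of
`F_{ab} = -∂_aA_b + ∂_bA_a + [A_a, A_b]`. -/
def pairCurvature (c : ι → 𝕜) (v : ι → V) (d : κ → 𝕜) (w : κ → V) (P Q : V → Matrix m m 𝕜)
    (x : V) : Matrix m m 𝕜 :=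
  constCoeffDeriv d w P x - constCoeffDeriv c v Q x + (P x * Q x - Q x * P x)

theorem covDeriv_covDeriv_sub_covDeriv_covDeriv (c : ι → 𝕜) (v : ι → V) (d : κ → 𝕜) (w : κ → V)
    {P Q : V → Matrix m m 𝕜} {E : V → Matrix m n 𝕜} (hP : DifferentiableAt ℝ P x)
    (hQ : DifferentiableAt ℝ Q x) (hE : ContDiffAt ℝ 2 E x) :
    covDeriv c v P (covDeriv d w Q E) x - covDeriv d w Q (covDeriv c v P E) x =
      pairCurvature c v d w P Q x * E x := by
  have hE₁ : DifferentiableAt ℝ E x := hE.differentiableAt two_ne_zero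
  have hE₂ := differentiableAt_fderiv_of_contDiffAt_two hE
  have hδεE : constCoeffDeriv c v (covDeriv d w Q E) x =
      constCoeffDeriv c v (constCoeffDeriv d w E) x -
        (Q x * constCoeffDeriv c v E x + constCoeffDeriv c v Q x * E x) := by
    rw [← constCoeffDeriv_matrix_mul c v hQ hE₁]
    exact constCoeffDeriv_sub c v (differentiableAt_constCoeffDeriv d w hE₂)
      (differentiableAt_matrix_mul hQ hE₁)
  have hεδE : constCoeffDeriv d w (covDeriv c v P E) x =
      constCoeffDeriv c v (constCoeffDeriv d w E) x -
        (P x * constCoeffDeriv d w E x + constCoeffDeriv d w P x * E x) := by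
    rw [constCoeffDeriv_comm c v d w hE, ← constCoeffDeriv_matrix_mul d w hP hE₁]
    exact constCoeffDeriv_sub d w (differentiableAt_constCoeffDeriv c v hE₂)
      (differentiableAt_matrix_mul hP hE₁)
  rw [covDeriv.eq_def c v P (covDeriv d w Q E), covDeriv.eq_def d w Q (covDeriv c v P E),
    hδεE, hεδE]
  simp only [covDeriv, pairCurvature, Matrix.mul_sub, Matrix.sub_mul, Matrix.add_mul,
    Matrix.mul_assoc]
  abel

end CovariantDerivative

section PartialDerivatives

variable {W : Type*} [NormedAddCommGroup W] [NormedSpace ℝ W] {f : P3 → W} {p : P3}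

theorem pdx_eq_fderiv (hf : DifferentiableAt ℝ f p) : pdx f p = fderiv ℝ f p (1, 0, 0) :=
  (HasFDerivAt.comp_hasDerivAt (l := f) p.1 hf.hasFDerivAt
    ((hasDerivAt_id _).prodMk ((hasDerivAt_const _ _).prodMk (hasDerivAt_const _ _)))).deriv

theorem pdy_eq_fderiv (hf : DifferentiableAt ℝ f p) : pdy f p = fderiv ℝ f p (0, 1, 0) :=
  (HasFDerivAt.comp_hasDerivAt (l := f) p.2.1 hf.hasFDerivAt
    ((hasDerivAt_const _ _).prodMk ((hasDerivAt_id _).prodMk (hasDerivAt_const _ _)))).deriv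

theorem pdt_eq_fderiv (hf : DifferentiableAt ℝ f p) : pdt f p = fderiv ℝ f p (0, 0, 1) :=
  (HasFDerivAt.comp_hasDerivAt (l := f) p.2.2 hf.hasFDerivAt
    ((hasDerivAt_const _ _).prodMk ((hasDerivAt_const _ _).prodMk (hasDerivAt_id _)))).deriv

/-- The directions of `∂_x`, `∂_y`, `∂_t`, in this order. -/
def coordFrame : Fin 3 → P3 := ![(1, 0, 0), (0, 1, 0), (0, 0, 1)]

theorem constCoeffDeriv_coordFrame {R : Type*} [Semiring R] [Module R W] (c : Fin 3 → R)
    (hf : DifferentiableAt ℝ f p) :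
    constCoeffDeriv c coordFrame f p = c 0 • pdx f p + c 1 • pdy f p + c 2 • pdt f p := by
  simp [constCoeffDeriv, coordFrame, Fin.sum_univ_three, pdx_eq_fderiv hf, pdy_eq_fderiv hf,
    pdt_eq_fderiv hf]

end PartialDerivatives

section LaxPair

variable {n : ℕ} {Ax Ay At Ph : P3 → Mat n} {p : P3}

/-- Coefficients of `½∂_t + ν · ½(∂_x - J ∂_y)` in `coordFrame`. The pair `(J, ν)` is `(i, μ)` for
`D₁(μ)` and `(-i, μ⁻¹)` for `D₂(μ)`. -/
def laxCoeff (J ν : ℂ) : Fin 3 → ℂ := ![ν * 2⁻¹, -(ν * 2⁻¹ * J), 2⁻¹]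

/-- The potential `½(A_t + Jφ) + ν · ½(A_x - J A_y)`, with `(J, ν)` as in `laxCoeff`. -/
def laxPotential (Ax Ay At Ph : P3 → Mat n) (J ν : ℂ) : P3 → Mat n :=
  (2⁻¹ : ℂ) • (At + J • Ph) + ν • ((2⁻¹ : ℂ) • (Ax - J • Ay))

theorem differentiableAt_laxPotential (hx : DifferentiableAt ℝ Ax p) (hy : DifferentiableAt ℝ Ay p)
    (ht : DifferentiableAt ℝ At p) (hφ : DifferentiableAt ℝ Ph p) (J ν : ℂ) :
    DifferentiableAt ℝ (laxPotential Ax Ay At Ph J ν) p :=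
  ((ht.add (hφ.const_smul J)).const_smul (2⁻¹ : ℂ)).add
    (((hx.sub (hy.const_smul J)).const_smul (2⁻¹ : ℂ)).const_smul ν)

theorem constCoeffDeriv_laxPotential {ι : Type*} [Fintype ι] (c : ι → ℂ) (v : ι → P3)
    (hx : DifferentiableAt ℝ Ax p) (hy : DifferentiableAt ℝ Ay p)
    (ht : DifferentiableAt ℝ At p) (hφ : DifferentiableAt ℝ Ph p) (J ν : ℂ) :
    constCoeffDeriv c v (laxPotential Ax Ay At Ph J ν) p =
      laxPotential (constCoeffDeriv c v Ax) (constCoeffDeriv c v Ay) (constCoeffDeriv c v At)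
        (constCoeffDeriv c v Ph) J ν p := by
  have ht' := ht.add (hφ.const_smul J)
  have hx' := hx.sub (hy.const_smul J)
  rw [laxPotential, constCoeffDeriv_add c v (ht'.const_smul (2⁻¹ : ℂ))
      ((hx'.const_smul (2⁻¹ : ℂ)).const_smul ν),
    constCoeffDeriv_const_smul c v _ ht', constCoeffDeriv_add c v ht (hφ.const_smul J),
    constCoeffDeriv_const_smul c v _ (hx'.const_smul (2⁻¹ : ℂ)),
    constCoeffDeriv_const_smul c v _ hx', constCoeffDeriv_sub c v hx (hy.const_smul J),
    constCoeffDeriv_const_smul c v _ hφ, constCoeffDeriv_const_smul c v _ hy]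
  rfl

theorem DOneOp_eq_covDeriv (μ : ℂ) {E : P3 → Mat n} (hE : DifferentiableAt ℝ E p) :
    DOneOp Ax Ay At Ph μ E p =
      covDeriv (laxCoeff I μ) coordFrame (laxPotential Ax Ay At Ph I μ) E p := by
  rw [covDeriv, constCoeffDeriv_coordFrame _ hE]
  simp only [DOneOp, pdz, laxPotential, Pi.add_apply, Pi.sub_apply, Pi.smul_apply, laxCoeff,
    cons_val]
  module

theorem DTwoOp_eq_covDeriv (μ : ℂ) {E : P3 → Mat n} (hE : DifferentiableAt ℝ E p) :
    DTwoOp Ax Ay At Ph μ E p =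
      covDeriv (laxCoeff (-I) μ⁻¹) coordFrame (laxPotential Ax Ay At Ph (-I) μ⁻¹) E p := by
  rw [covDeriv, constCoeffDeriv_coordFrame _ hE]
  simp only [DTwoOp, pdzbar, laxPotential, Pi.add_apply, Pi.sub_apply, Pi.smul_apply, laxCoeff,
    cons_val, neg_smul, sub_neg_eq_add, ← sub_eq_add_neg]
  module

/-- `F_xy + ∇_tφ`, the defect of the first monopole equation. -/
def defectXY (Ax Ay At Ph : P3 → Mat n) (p : P3) : Mat n :=
  -(pdx Ay p) + pdy Ax p + brk (Ax p) (Ay p) + (pdt Ph p - brk (At p) (Ph p))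

/-- `F_xt + ∇_yφ`, the defect of the second monopole equation. -/
def defectXT (Ax Ay At Ph : P3 → Mat n) (p : P3) : Mat n :=
  -(pdx At p) + pdt Ax p + brk (Ax p) (At p) + (pdy Ph p - brk (Ay p) (Ph p))

/-- `F_yt - ∇_xφ`, the defect of the third monopole equation. -/
def defectYT (Ax Ay At Ph : P3 → Mat n) (p : P3) : Mat n :=
  -(pdy At p) + pdt Ay p + brk (Ay p) (At p) - (pdx Ph p - brk (Ax p) (Ph p))

theorem monopoleEqAt_iff_defects_eq_zero :
    MonopoleEqAt Ax Ay At Ph p ↔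
      defectXY Ax Ay At Ph p = 0 ∧ defectXT Ax Ay At Ph p = 0 ∧ defectYT Ax Ay At Ph p = 0 := by
  rw [MonopoleEqAt, eq_neg_iff_add_eq_zero, eq_neg_iff_add_eq_zero,
    ← sub_eq_zero (b := pdx Ph p - _)]
  rfl

/-- The curvature of the pair `D₁(μ)`, `D₂(μ)`. -/
def laxCurvature (Ax Ay At Ph : P3 → Mat n) (μ : ℂ) : P3 → Mat n :=
  pairCurvature (laxCoeff I μ) coordFrame (laxCoeff (-I) μ⁻¹) coordFrame
    (laxPotential Ax Ay At Ph I μ) (laxPotential Ax Ay At Ph (-I) μ⁻¹)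

theorem laxCurvature_eq_laurent (hx : DifferentiableAt ℝ Ax p) (hy : DifferentiableAt ℝ Ay p)
    (ht : DifferentiableAt ℝ At p) (hφ : DifferentiableAt ℝ Ph p) {μ : ℂ} (hμ : μ ≠ 0) :
    laxCurvature Ax Ay At Ph μ p =
      (I / 2) • defectXY Ax Ay At Ph p +
        μ • (4⁻¹ : ℂ) • (defectXT Ax Ay At Ph p - I • defectYT Ax Ay At Ph p) +
        μ⁻¹ • (-4⁻¹ : ℂ) • (defectXT Ax Ay At Ph p + I • defectYT Ax Ay At Ph p) := by
  rw [laxCurvature, pairCurvature, constCoeffDeriv_laxPotential _ _ hx hy ht hφ,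
    constCoeffDeriv_laxPotential _ _ hx hy ht hφ]
  simp only [laxPotential, Pi.add_apply, Pi.sub_apply, Pi.smul_apply,
    constCoeffDeriv_coordFrame _ hx, constCoeffDeriv_coordFrame _ hy,
    constCoeffDeriv_coordFrame _ ht, constCoeffDeriv_coordFrame _ hφ, laxCoeff, cons_val,
    defectXY, defectXT, defectYT, brk, mul_add, add_mul, mul_sub, sub_mul, smul_add, smul_sub,
    mul_smul_comm, smul_mul_assoc]
  match_scalars <;> field_simp <;> grind [I_sq]

theorem commute_laxPair_iff_laxCurvature_mul_eq_zero (hx : Differentiable ℝ Ax)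
    (hy : Differentiable ℝ Ay) (ht : Differentiable ℝ At) (hφ : Differentiable ℝ Ph) (μ : ℂ)
    {E : P3 → Mat n} (hE : ContDiff ℝ 2 E) (p : P3) :
    DOneOp Ax Ay At Ph μ (DTwoOp Ax Ay At Ph μ E) p =
        DTwoOp Ax Ay At Ph μ (DOneOp Ax Ay At Ph μ E) p ↔
      laxCurvature Ax Ay At Ph μ p * E p = 0 := by
  have hE₁ : Differentiable ℝ E := hE.differentiable two_ne_zero
  have hP (J ν : ℂ) (q : P3) : DifferentiableAt ℝ (laxPotential Ax Ay At Ph J ν) q :=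
    differentiableAt_laxPotential (hx q) (hy q) (ht q) (hφ q) J ν
  have hD (J ν : ℂ) : DifferentiableAt ℝ
      (covDeriv (laxCoeff J ν) coordFrame (laxPotential Ax Ay At Ph J ν) E) p :=
    differentiableAt_covDeriv _ _ (hP J ν p) hE.contDiffAt
  have hD₁ : DOneOp Ax Ay At Ph μ E = _ := funext fun q => DOneOp_eq_covDeriv μ (hE₁ q)
  have hD₂ : DTwoOp Ax Ay At Ph μ E = _ := funext fun q => DTwoOp_eq_covDeriv μ (hE₁ q)
  rw [hD₁, hD₂, DOneOp_eq_covDeriv μ (hD _ _), DTwoOp_eq_covDeriv μ (hD _ _), ← sub_eq_zero,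
    covDeriv_covDeriv_sub_covDeriv_covDeriv _ _ _ _ (hP _ _ p) (hP _ _ p) hE.contDiffAt]
  rfl

theorem monopoleEqAt_iff_laxCurvature_eq_zero (hx : DifferentiableAt ℝ Ax p)
    (hy : DifferentiableAt ℝ Ay p) (ht : DifferentiableAt ℝ At p) (hφ : DifferentiableAt ℝ Ph p) :
    MonopoleEqAt Ax Ay At Ph p ↔ ∀ μ : ℂ, μ ≠ 0 → laxCurvature Ax Ay At Ph μ p = 0 := by
  have hlaurent : (∀ μ : ℂ, μ ≠ 0 → laxCurvature Ax Ay At Ph μ p = 0) ↔ _ :=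
    (forall₂_congr fun μ hμ => by rw [laxCurvature_eq_laurent hx hy ht hφ hμ]).trans
      forall_ne_zero_laurent_eq_zero_iff
  rw [hlaurent, monopoleEqAt_iff_defects_eq_zero]
  have hI : (I / 2 : ℂ) ≠ 0 := by simp
  have h4 : (4⁻¹ : ℂ) ≠ 0 := by simp
  rw [smul_eq_zero_iff_right hI, smul_eq_zero_iff_right h4,
    smul_eq_zero_iff_right (neg_ne_zero.2 h4), sub_smul_eq_zero_and_add_smul_eq_zero_iff I_ne_zero]

end LaxPair

theorem monopole_lax_mu_general {n : ℕ} {k : WithTop ℕ∞} (hk : 2 ≤ k) {Ax Ay At Ph : P3 → Mat n}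
    (hx : Differentiable ℝ Ax) (hy : Differentiable ℝ Ay)
    (ht : Differentiable ℝ At) (hφ : Differentiable ℝ Ph) :
    MonopoleEq Ax Ay At Ph ↔
      ∀ μ : ℂ, μ ≠ 0 → ∀ E : P3 → Mat n, ContDiff ℝ k E → ∀ p : P3,
        DOneOp Ax Ay At Ph μ (DTwoOp Ax Ay At Ph μ E) p =
          DTwoOp Ax Ay At Ph μ (DOneOp Ax Ay At Ph μ E) p := by
  have hcomm (μ : ℂ) {E : P3 → Mat n} (hE : ContDiff ℝ k E) (p : P3) :=
    commute_laxPair_iff_laxCurvature_mul_eq_zero hx hy ht hφ μ (hE.of_le hk) p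
  have hflat (p : P3) := monopoleEqAt_iff_laxCurvature_eq_zero (hx p) (hy p) (ht p) (hφ p)
  constructor
  · intro h μ hμ E hE p
    rw [hcomm μ hE p, (hflat p).1 (h p) μ hμ, zero_mul]
  · intro h p
    refine (hflat p).2 fun μ hμ => ?_
    simpa using (hcomm μ contDiff_const p).1 (h μ hμ (fun _ => 1) contDiff_const p)

/-- `(A, φ)` solves the space-time monopole equation iff for every
`μ ∈ ℂ∖{0}` the operators `D₁(μ)` and `D₂(μ)` commute on all smooth maps `E : ℝ³ → Mₙ(ℂ)`. -/
theorem monopole_lax_mu {n : ℕ} (Ax Ay At Ph : P3 → Mat n)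
    (hxs : ContDiff ℝ (⊤ : ℕ∞) Ax) (hys : ContDiff ℝ (⊤ : ℕ∞) Ay)
    (hts : ContDiff ℝ (⊤ : ℕ∞) At) (hps : ContDiff ℝ (⊤ : ℕ∞) Ph)
    (hxa : SkewHerm Ax) (hya : SkewHerm Ay) (hta : SkewHerm At) (hpa : SkewHerm Ph) :
    MonopoleEq Ax Ay At Ph ↔
      (∀ μ : ℂ, μ ≠ 0 → ∀ E : P3 → Mat n, ContDiff ℝ (⊤ : ℕ∞) E → ∀ p : P3,
        DOneOp Ax Ay At Ph μ (DTwoOp Ax Ay At Ph μ E) p =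
          DTwoOp Ax Ay At Ph μ (DOneOp Ax Ay At Ph μ E) p) := by
  have two_le_top : (2 : WithTop ℕ∞) ≤ (⊤ : ℕ∞) := WithTop.coe_le_coe.2 le_top
  exact monopole_lax_mu_general two_le_top (hxs.differentiable (by simp))
    (hys.differentiable (by simp)) (hts.differentiable (by simp)) (hps.differentiable (by simp))
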